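/- If the initial route valuation of the CULO model is formed from link-level valuations, i.e., s^0 = Λᵀ v^0 for some v^0 ∈ ℝ^A, and the CULO iterates converge to a point p̄ ∈ P*, then p̄ is the MEUE strategy, i.e., the unique minimizer of the negative entropy φ over P*. -/

import Mathlib

/-!
Since `s⁰` and every cost vector lie in the range of `Λᵀ`, so does every valuation `sᵗ`. By strict
monotonicity of `u` any two equilibria `p'` and `p̄` carry the same link flow
(`UEset_flow_unique`), so `q ∘ (p' - p̄)` is orthogonal to the range of `Λᵀ`; it is also orthogonal
to vectors that are constant on each OD pair. As `log pᵗ` is `-r sᵗ` plus such a vector,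
`∑ₖ qₖ (p'ₖ - p̄ₖ) log pᵗₖ = 0` (`sum_log_logit_eq_zero`), which says
`φ(p') - φ(p̄) = D(p', pᵗ) - D(p̄, pᵗ)` for every `t`.

Let `t → ∞`. Then `D(p̄, pᵗ) → 0`. Since `p̄` may have zero entries at which `p'` is positive, the
other divergence is not passed to the limit itself but bounded below, using the termwise inequality
`a (log a - log b) ≥ (√a - √b)² + a - b` (`hellinger_le`), whose right side is continuous. This gives
`φ(p') - φ(p̄) ≥ ∑ₖ qₖ (√p'ₖ - √p̄ₖ)²`, which is positive when `p' ≠ p̄`.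
-/

open Matrix Filter Finset Topology

noncomputable section

variable {A W K : Type*}

/-- OD-route incidence matrix `Σ`: each column is the standard unit vector at `od k`
(every route `k` serves exactly one OD pair, `od k`). -/
def Sig [DecidableEq W] (od : K → W) : Matrix W K ℝ :=
  Matrix.of fun w k => if od k = w then 1 else 0

/-- The strategy set `P = {p : p ≥ 0, Σ p = 1}`. -/
def Pset [Fintype K] [DecidableEq W] (od : K → W) : Set (K → ℝ) :=
  {p | (∀ k, 0 ≤ p k) ∧ ∀ w : W, (Sig od).mulVec p w = 1}

/-- `q = Σᵀ d`. -/
def qvec [Fintype W] [DecidableEq W] (od : K → W) (d : W → ℝ) : K → ℝ :=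
  (Sig od)ᵀ.mulVec d

/-- `bΛ = Λ · diag q`. -/
def bLam [Fintype K] [Fintype W] [DecidableEq W] [DecidableEq K]
    (Λ : Matrix A K ℝ) (od : K → W) (d : W → ℝ) : Matrix A K ℝ :=
  Λ * Matrix.diagonal (qvec od d)

/-- The link-flow set `X = {bΛ p : p ∈ P}`. -/
def Xset [Fintype K] [Fintype W] [DecidableEq W] [DecidableEq K]
    (Λ : Matrix A K ℝ) (od : K → W) (d : W → ℝ) : Set (A → ℝ) :=
  (fun p => (bLam Λ od d).mulVec p) '' Pset od

/-- The route-cost map `c(p) = Λᵀ u(bΛ p)`. -/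
def routeCost [Fintype A] [Fintype K] [Fintype W] [DecidableEq W] [DecidableEq K]
    (Λ : Matrix A K ℝ) (od : K → W) (d : W → ℝ)
    (u : (A → ℝ) → (A → ℝ)) : (K → ℝ) → (K → ℝ) :=
  fun p => Λᵀ.mulVec (u ((bLam Λ od d).mulVec p))

/-- The UE set `P*`: solutions of the variational inequality. -/
def UEset [Fintype A] [Fintype K] [Fintype W] [DecidableEq W] [DecidableEq K]
    (Λ : Matrix A K ℝ) (od : K → W) (d : W → ℝ)
    (u : (A → ℝ) → (A → ℝ)) : Set (K → ℝ) :=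
  {p | p ∈ Pset od ∧ ∀ p' ∈ Pset od, 0 ≤ routeCost Λ od d u p ⬝ᵥ (p' - p)}

/-- The logit map `q_r`. -/
def logit [Fintype K] [DecidableEq W] (od : K → W) (r : ℝ) (s : K → ℝ) : K → ℝ :=
  fun k => Real.exp (-r * s k) /
    ∑ k' ∈ Finset.univ.filter (fun k' => od k' = od k), Real.exp (-r * s k')

/-- The negative entropy `φ(p) = ∑ₖ qₖ pₖ log pₖ` (with `0·log 0 = 0`). -/
def negEnt [Fintype K] [Fintype W] [DecidableEq W] (od : K → W) (d : W → ℝ)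
    (p : K → ℝ) : ℝ :=
  ∑ k, qvec od d k * (p k * Real.log (p k))

/-- The KL divergence `D(p, p') = ∑ₖ qₖ pₖ (log pₖ − log p'ₖ)` (with `0·log 0 = 0`). -/
def KLdiv [Fintype K] [Fintype W] [DecidableEq W] (od : K → W) (d : W → ℝ)
    (p p' : K → ℝ) : ℝ :=
  ∑ k, qvec od d k * (p k * (Real.log (p k) - Real.log (p' k)))

lemma qvec_apply [Fintype W] [DecidableEq W] (od : K → W) (d : W → ℝ) (k : K) :
    qvec od d k = d (od k) := by
  simp [qvec, Sig, Matrix.mulVec, dotProduct]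

lemma sum_od_mul [Fintype W] [Fintype K] [DecidableEq W] {od : K → W} {p : K → ℝ}
    (hp : p ∈ Pset od) (f : W → ℝ) : ∑ k, f (od k) * p k = ∑ w, f w := by
  calc ∑ k, f (od k) * p k = ∑ k, ∑ w, f w * ((if od k = w then 1 else 0) * p k) := by
        refine Finset.sum_congr rfl fun k _ => ?_
        simp
    _ = ∑ w, f w * (Sig od).mulVec p w := by
        rw [Finset.sum_comm]
        simp [Sig, Matrix.mulVec, dotProduct, Finset.mul_sum]
    _ = ∑ w, f w := by simp [hp.2]

/-- The link-route pairing `⟨Λᵀ v, q ∘ x⟩ = ⟨v, bΛ x⟩`. -/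
lemma sum_qvec_mulVec [Fintype A] [Fintype W] [Fintype K] [DecidableEq W] [DecidableEq K]
    (Λ : Matrix A K ℝ) (od : K → W) (d : W → ℝ) (v : A → ℝ) (x : K → ℝ) :
    ∑ k, qvec od d k * (Λᵀ.mulVec v k * x k) = v ⬝ᵥ (bLam Λ od d).mulVec x := by
  rw [Matrix.dotProduct_mulVec]
  refine Finset.sum_congr rfl fun k _ => ?_
  rw [Matrix.mulVec_transpose, bLam, ← Matrix.vecMul_vecMul, Matrix.vecMul_diagonal]
  ring

/-- The equilibrium inequality also holds with route weights `q`: as `P` is a product over OD pairs,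
the unweighted inequality holds for each OD pair separately, and `q` is constant on it. -/
lemma UEset_weighted [Fintype A] [Fintype W] [Fintype K] [DecidableEq W] [DecidableEq K]
    {Λ : Matrix A K ℝ} {od : K → W} {d : W → ℝ} (hd : ∀ w, 0 < d w)
    {u : (A → ℝ) → (A → ℝ)} {p p' : K → ℝ} (hp : p ∈ UEset Λ od d u) (hp' : p' ∈ Pset od) :
    0 ≤ ∑ k, qvec od d k * (routeCost Λ od d u p k * (p' k - p k)) := by
  have hw : ∀ w, 0 ≤ ∑ k, if od k = w then routeCost Λ od d u p k * (p' k - p k) else 0 := by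
    intro w
    -- deviate to `p'` on the OD pair `w` only
    have hmix : (fun k => if od k = w then p' k else p k) ∈ Pset od := by
      refine ⟨fun k => ?_, fun w' => ?_⟩
      · dsimp only
        split_ifs
        · exact hp'.1 k
        · exact hp.1.1 k
      · by_cases h : w' = w
        · rw [← hp'.2 w']
          refine Finset.sum_congr rfl fun k _ => ?_
          by_cases hk : od k = w' <;> simp_all [Sig]
        · rw [← hp.1.2 w']
          refine Finset.sum_congr rfl fun k _ => ?_
          by_cases hk : od k = w' <;> simp_all [Sig]
    refine (hp.2 _ hmix).trans_eq (Finset.sum_congr rfl fun k _ => ?_)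
    by_cases hk : od k = w <;> simp [hk]
  calc 0 ≤ ∑ w, d w * ∑ k, if od k = w then routeCost Λ od d u p k * (p' k - p k) else 0 :=
        Finset.sum_nonneg fun w _ => mul_nonneg (hd w).le (hw w)
    _ = _ := by
        simp only [Finset.mul_sum]
        rw [Finset.sum_comm]
        refine Finset.sum_congr rfl fun k _ => ?_
        simp [qvec_apply]

lemma UEset_flow_unique [Fintype A] [Fintype W] [Fintype K] [DecidableEq W] [DecidableEq K]
    {Λ : Matrix A K ℝ} {od : K → W} {d : W → ℝ} (hd : ∀ w, 0 < d w)
    {u : (A → ℝ) → (A → ℝ)}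
    (hmono : ∀ x ∈ Xset Λ od d, ∀ x' ∈ Xset Λ od d, x ≠ x' →
      0 < (u x - u x') ⬝ᵥ (x - x'))
    {p p' : K → ℝ} (hp : p ∈ UEset Λ od d u) (hp' : p' ∈ UEset Λ od d u) :
    (bLam Λ od d).mulVec p = (bLam Λ od d).mulVec p' := by
  by_contra hne
  have h := hmono _ ⟨p, hp.1, rfl⟩ _ ⟨p', hp'.1, rfl⟩ hne
  have h1 := UEset_weighted hd hp hp'.1
  have h2 := UEset_weighted hd hp' hp.1
  have e1 := sum_qvec_mulVec Λ od d (u ((bLam Λ od d).mulVec p)) (p' - p)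
  have e2 := sum_qvec_mulVec Λ od d (u ((bLam Λ od d).mulVec p')) (p - p')
  simp only [routeCost] at h1 h2
  simp only [Pi.sub_apply, Matrix.mulVec_sub, dotProduct_sub] at e1 e2
  simp only [sub_dotProduct, dotProduct_sub] at h
  linarith

/-- The term `(√a - √b)²` is the Hellinger integrand; the inequality comes from
`log y ≤ y - 1` at `y = √b / √a`. -/
lemma hellinger_le {a b : ℝ} (ha : 0 ≤ a) (hb : 0 < b) :
    (√a - √b) ^ 2 + a - b ≤ a * (Real.log a - Real.log b) := by
  rcases ha.eq_or_lt with rfl | ha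
  · simp [Real.sq_sqrt hb.le]
  have hsa := Real.sqrt_pos.2 ha
  have hsb := Real.sqrt_pos.2 hb
  have h := Real.log_le_sub_one_of_pos (div_pos hsb hsa)
  rw [Real.log_div hsb.ne' hsa.ne', Real.log_sqrt hb.le, Real.log_sqrt ha.le] at h
  have h3 : a * (√b / √a) = √a * √b := by
    nth_rewrite 1 [← Real.mul_self_sqrt ha.le]
    field_simp
  have h4 := mul_le_mul_of_nonneg_left h ha.le
  nlinarith [Real.sq_sqrt ha.le, Real.sq_sqrt hb.le]

lemma sum_exp_fiber_pos [Fintype K] [DecidableEq W] (od : K → W) (r : ℝ) (s : K → ℝ) (k : K) :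
    0 < ∑ k' ∈ Finset.univ.filter (fun k' => od k' = od k), Real.exp (-r * s k') :=
  Finset.sum_pos (fun _ _ => Real.exp_pos _) ⟨k, by simp⟩

lemma logit_pos [Fintype K] [DecidableEq W] (od : K → W) (r : ℝ) (s : K → ℝ) (k : K) :
    0 < logit od r s k :=
  div_pos (Real.exp_pos _) (sum_exp_fiber_pos od r s k)

lemma sum_log_logit_eq_zero [Fintype A] [Fintype W] [Fintype K] [DecidableEq W] [DecidableEq K]
    {Λ : Matrix A K ℝ} {od : K → W} {d : W → ℝ} {p p' : K → ℝ}
    (hp : p ∈ Pset od) (hp' : p' ∈ Pset od)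
    (hflow : (bLam Λ od d).mulVec p = (bLam Λ od d).mulVec p') (r : ℝ) (v : A → ℝ) :
    ∑ k, qvec od d k * ((p' k - p k) * Real.log (logit od r (Λᵀ.mulVec v) k)) = 0 := by
  set s := Λᵀ.mulVec v with hs
  let Z : W → ℝ := fun w => ∑ k' ∈ Finset.univ.filter (fun k' => od k' = w), Real.exp (-r * s k')
  have hlog : ∀ k, Real.log (logit od r s k) = -r * s k - Real.log (Z (od k)) := fun k => by
    rw [logit, Real.log_div (Real.exp_pos _).ne' (sum_exp_fiber_pos od r s k).ne', Real.log_exp]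
  have e := sum_qvec_mulVec Λ od d v (p' - p)
  rw [Matrix.mulVec_sub, hflow, sub_self, dotProduct_zero, ← hs] at e
  have z := sum_od_mul hp fun w => d w * Real.log (Z w)
  have z' := sum_od_mul hp' fun w => d w * Real.log (Z w)
  calc _ = -r * ∑ k, qvec od d k * (s k * (p' - p) k)
        - (∑ k, d (od k) * Real.log (Z (od k)) * p' k
          - ∑ k, d (od k) * Real.log (Z (od k)) * p k) := by
        rw [Finset.mul_sum, ← Finset.sum_sub_distrib, ← Finset.sum_sub_distrib]
        refine Finset.sum_congr rfl fun k _ => ?_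
        rw [hlog, qvec_apply, Pi.sub_apply]
        ring
    _ = 0 := by rw [e, z, z']; ring


/-- Proposition 6, MEUE affirmation condition (B): if the initial
route valuation of the CULO model is formed from link-level valuations, i.e.
`s⁰ = Λᵀ v⁰` for some `v⁰ ∈ ℝ^A`, and the iterates converge to `p̄ ∈ P*`, then `p̄` is
the MEUE strategy, i.e. the unique minimizer of the negative entropy `φ` over `P*`. -/
theorem statement12
    [Fintype A] [Fintype W] [Fintype K] [DecidableEq W] [DecidableEq K]
    (Λ : Matrix A K ℝ) (od : K → W) (d : W → ℝ)
    (hΛ : ∀ a k, Λ a k = 0 ∨ Λ a k = 1)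
    (hd : ∀ w, 0 < d w)
    (u : (A → ℝ) → (A → ℝ))
    (hu : ContDiffOn ℝ 1 u (Xset Λ od d))
    (hnonneg : ∀ x ∈ Xset Λ od d, ∀ a, 0 ≤ u x a)
    (hmono : ∀ x ∈ Xset Λ od d, ∀ x' ∈ Xset Λ od d, x ≠ x' →
      0 < (u x - u x') ⬝ᵥ (x - x'))
    (r : ℝ) (hr : 0 < r)
    (η : ℕ → ℝ) (hη : ∀ t, 0 < η t)
    (s : ℕ → K → ℝ) (p : ℕ → K → ℝ)
    (v0 : A → ℝ) (hs0 : s 0 = Λᵀ.mulVec v0)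
    (hsdyn : ∀ t, s (t + 1) = s t + η (t + 1) • routeCost Λ od d u (p t))
    (hpdyn : ∀ t, p t = logit od r (s t))
    (pbar : K → ℝ) (hUE : pbar ∈ UEset Λ od d u)
    (hconv : Tendsto p atTop (nhds pbar)) :
    ∀ p' ∈ UEset Λ od d u, p' ≠ pbar → negEnt od d pbar < negEnt od d p' := by
  intro p' hp' hne
  have hq : ∀ k, 0 < qvec od d k := fun k => by rw [qvec_apply]; exact hd _
  have hflow := UEset_flow_unique hd hmono hUE hp'
  have hrange : ∀ t, ∃ v : A → ℝ, s t = Λᵀ.mulVec v := by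
    intro t
    induction t with
    | zero => exact ⟨v0, hs0⟩
    | succ t ih =>
      obtain ⟨v, hv⟩ := ih
      refine ⟨v + η (t + 1) • u ((bLam Λ od d).mulVec (p t)), ?_⟩
      rw [hsdyn, hv, Matrix.mulVec_add, Matrix.mulVec_smul, routeCost]
  have hppos : ∀ t k, 0 < p t k := fun t k => by rw [hpdyn]; exact logit_pos od r _ k
  have hpk : ∀ k, Tendsto (fun t => p t k) atTop (𝓝 (pbar k)) := tendsto_pi_nhds.1 hconv
  have hKL : ∀ t, negEnt od d p' - negEnt od d pbar =
      KLdiv od d p' (p t) - KLdiv od d pbar (p t) := by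
    intro t
    obtain ⟨v, hv⟩ := hrange t
    have h := sum_log_logit_eq_zero hUE.1 hp'.1 hflow r v
    rw [← hv, ← hpdyn] at h
    rw [← sub_eq_zero, ← h]
    simp only [negEnt, KLdiv, ← Finset.sum_sub_distrib]
    refine Finset.sum_congr rfl fun k _ => ?_
    ring
  have hKL0 : Tendsto (fun t => KLdiv od d pbar (p t)) atTop (𝓝 0) := by
    have h : Tendsto (fun t => KLdiv od d pbar (p t)) atTop (𝓝 (∑ _k : K, (0 : ℝ))) := by
      refine tendsto_finsetSum _ fun k _ => ?_
      rcases eq_or_ne (pbar k) 0 with h0 | h0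
      · simp [h0]
      · have := ((((hpk k).log h0).const_sub (Real.log (pbar k))).const_mul
          (pbar k)).const_mul (qvec od d k)
        simpa using this
    simpa using h
  have hlower : ∀ t, ∑ k, qvec od d k * ((√(p' k) - √(p t k)) ^ 2 + p' k - p t k)
      ≤ KLdiv od d p' (p t) := fun t =>
    Finset.sum_le_sum fun k _ =>
      mul_le_mul_of_nonneg_left (hellinger_le (hp'.1.1 k) (hppos t k)) (hq k).le
  have hlim : Tendsto
      (fun t => ∑ k, qvec od d k * ((√(p' k) - √(p t k)) ^ 2 + p' k - p t k)) atTop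
      (𝓝 (∑ k, qvec od d k * ((√(p' k) - √(pbar k)) ^ 2 + p' k - pbar k))) :=
    tendsto_finsetSum _ fun k _ =>
      ((((((hpk k).sqrt).const_sub _).pow 2).add_const _).sub (hpk k)).const_mul _
  have hle : ∑ k, qvec od d k * ((√(p' k) - √(pbar k)) ^ 2 + p' k - pbar k)
      ≤ negEnt od d p' - negEnt od d pbar := by
    have h := le_of_tendsto_of_tendsto' (hlim.sub hKL0) tendsto_const_nhds
      fun t => (sub_le_sub_right (hlower t) _).trans_eq (hKL t).symm
    simpa using h
  have hsum : ∑ k, qvec od d k * ((√(p' k) - √(pbar k)) ^ 2 + p' k - pbar k)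
      = ∑ k, qvec od d k * (√(p' k) - √(pbar k)) ^ 2 := by
    have z := (sum_od_mul hp'.1 d).trans (sum_od_mul hUE.1 d).symm
    rw [← sub_eq_zero, ← Finset.sum_sub_distrib] at z ⊢
    rw [← z]
    refine Finset.sum_congr rfl fun k _ => ?_
    rw [qvec_apply]
    ring
  obtain ⟨k₀, hk₀⟩ := Function.ne_iff.1 hne
  have hpos : 0 < ∑ k, qvec od d k * (√(p' k) - √(pbar k)) ^ 2 := by
    refine Finset.sum_pos' (fun k _ => mul_nonneg (hq k).le (sq_nonneg _))
      ⟨k₀, Finset.mem_univ _, mul_pos (hq k₀) (sq_pos_of_ne_zero ?_)⟩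
    rw [sub_ne_zero]
    exact fun h => hk₀ ((Real.sqrt_inj (hp'.1.1 k₀) (hUE.1.1 k₀)).1 h)
  linarith
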